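/- arXiv:2512.25029 — 2 statements merged into one kernel-verified Lean document; each statement's English description precedes it below -/
import Mathlib

section
/- Let X be a topological space such that (i) the space ConnectedComponents X of connected components of X, endowed with the quotient topology, is compact, Hausdorff and totally disconnected (i.e. profinite), and (ii) every connected component of X contains a point to which all points of that component specialize (for every x there exists x₀ in the connected component of x with y ⤳ x₀ for every y in that component). Then for every open subset V of X that is stable under specialization: the family of clopen subsets of X contained in V is directed under inclusion (it is closed under finite unions) and its union is exactly V; in particular, every point x ∈ V lies in some clopen subset Z of X with Z ⊆ V. -/
/-- If every connected component contains a point to which all its points specialize, then an open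
set stable under specialization contains the connected component of each of its points. -/
theorem StableUnderSpecialization.connectedComponent_subset_of_isOpen {X : Type*}
    [TopologicalSpace X]
    (hcomp : ∀ x : X, ∃ x₀ ∈ connectedComponent x, ∀ y ∈ connectedComponent x, y ⤳ x₀)
    {V : Set X} (hsp : StableUnderSpecialization V) (hV : IsOpen V) {x : X} (hx : x ∈ V) :
    connectedComponent x ⊆ V := by
  obtain ⟨x₀, -, h⟩ := hcomp x
  exact fun y hy => (h y hy).mem_open hV (hsp (h x mem_connectedComponent) hx)

/-- If the space of connected components is profinite, then every point of an open set that is a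
union of connected components has a clopen neighbourhood inside that set. -/
theorem IsOpen.exists_isClopen_of_connectedComponent_subset {X : Type*} [TopologicalSpace X]
    [CompactSpace (ConnectedComponents X)] [T2Space (ConnectedComponents X)]
    [TotallyDisconnectedSpace (ConnectedComponents X)] {V : Set X} (hV : IsOpen V)
    (hVc : ∀ x ∈ V, connectedComponent x ⊆ V) {x : X} (hx : x ∈ V) :
    ∃ Z : Set X, IsClopen Z ∧ Z ⊆ V ∧ x ∈ Z := by
  have hpre : ConnectedComponents.mk ⁻¹' (ConnectedComponents.mk '' V) = V := by
    rw [connectedComponents_preimage_image]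
    exact (Set.iUnion₂_subset hVc).antisymm
      fun y hy => Set.mem_biUnion hy mem_connectedComponent
  have hopen : IsOpen (ConnectedComponents.mk '' V) := by
    rwa [← ConnectedComponents.isQuotientMap_coe.isOpen_preimage, hpre]
  obtain ⟨W, hW, hxW, hWV⟩ :=
    compact_exists_isClopen_in_isOpen hopen (Set.mem_image_of_mem _ hx)
  exact ⟨_, hW.preimage ConnectedComponents.continuous_coe,
    (Set.preimage_mono hWV).trans hpre.subset, hxW⟩

/-- Suppose the space of connected components of `X` is profinite (compact,
Hausdorff and totally disconnected) and every connected component of `X` contains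
a point to which all points of that component specialize. Then for every open
subset `V` of `X` stable under specialization, the family of clopen subsets of `X`
contained in `V` is directed under inclusion (being closed under finite unions)
and its union is exactly `V`; in particular every `x ∈ V` lies in a clopen subset
of `X` contained in `V`. -/
theorem stmt_1 {X : Type*} [TopologicalSpace X]
    [CompactSpace (ConnectedComponents X)] [T2Space (ConnectedComponents X)]
    [TotallyDisconnectedSpace (ConnectedComponents X)]
    (hcomp : ∀ x : X, ∃ x₀ ∈ connectedComponent x,
      ∀ y ∈ connectedComponent x, y ⤳ x₀)
    (V : Set X) (hV : IsOpen V) (hsp : StableUnderSpecialization V) :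
    (∀ Z₁ Z₂ : Set X, IsClopen Z₁ → Z₁ ⊆ V → IsClopen Z₂ → Z₂ ⊆ V →
        IsClopen (Z₁ ∪ Z₂) ∧ Z₁ ∪ Z₂ ⊆ V) ∧
      DirectedOn (· ⊆ ·) {Z : Set X | IsClopen Z ∧ Z ⊆ V} ∧
      ⋃₀ {Z : Set X | IsClopen Z ∧ Z ⊆ V} = V ∧
      ∀ x ∈ V, ∃ Z : Set X, IsClopen Z ∧ Z ⊆ V ∧ x ∈ Z := by
  have hunion : ∀ Z₁ Z₂ : Set X, IsClopen Z₁ → Z₁ ⊆ V → IsClopen Z₂ → Z₂ ⊆ V →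
      IsClopen (Z₁ ∪ Z₂) ∧ Z₁ ∪ Z₂ ⊆ V :=
    fun _ _ h₁ h₁V h₂ h₂V => ⟨h₁.union h₂, Set.union_subset h₁V h₂V⟩
  have hex : ∀ x ∈ V, ∃ Z : Set X, IsClopen Z ∧ Z ⊆ V ∧ x ∈ Z := fun _ hx =>
    hV.exists_isClopen_of_connectedComponent_subset
      (fun _ hy => hsp.connectedComponent_subset_of_isOpen hcomp hV hy) hx
  refine ⟨hunion, ?_, ?_, hex⟩
  · rintro Z₁ ⟨h₁, h₁V⟩ Z₂ ⟨h₂, h₂V⟩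
    exact ⟨Z₁ ∪ Z₂, hunion Z₁ Z₂ h₁ h₁V h₂ h₂V, Set.subset_union_left, Set.subset_union_right⟩
  · refine (Set.sUnion_subset fun Z hZ => hZ.2).antisymm fun x hx => ?_
    obtain ⟨Z, hZ, hZV, hxZ⟩ := hex x hx
    exact ⟨Z, ⟨hZ, hZV⟩, hxZ⟩
end

section
/- Let C be a preadditive category with finite biproducts and all small colimits (for example, the category of modules over a ring). Let Stonean denote the category of extremally disconnected compact Hausdorff spaces, equipped with the coherent Grothendieck topology. Then for every small category J and every diagram F : J ⥤ Sheaf (coherentTopology Stonean) C of C-valued sheaves, the colimit of the underlying presheaves (which is computed objectwise in C) is again a sheaf for the coherent topology; equivalently, the inclusion functor from C-valued sheaves on Stonean to C-valued presheaves preserves all small colimits, so colimits of sheaves require no sheafification. -/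
open CategoryTheory CategoryTheory.Limits

universe u v w

namespace PartialMaps

open Finsupp

variable {X Y S S' : Type w}

/-- `IsSum A B C` says that the graph of the partial function `A` is the disjoint union of
the graphs of `B` and `C`, whose domains are disjoint. -/
def IsSum (A B C : X → Option S) : Prop :=
  ∀ x, (B x = none ∧ A x = C x) ∨ (C x = none ∧ A x = B x)

variable (X S) in
/-- Triples of partial functions, the first of which is the sum of the other two. -/
structure SumTriple : Type w where
  /-- The sum. -/
  total : X → Option S
  /-- The first summand. -/
  left : X → Option S
  /-- The second summand. -/
  right : X → Option S
  isSum : IsSum total left right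

variable (X S) in
/-- The relation `[A] - [B] - [C]` attached to a triple `A = B + C`. -/
noncomputable def relation : (SumTriple X S →₀ ℤ) →ₗ[ℤ] ((X → Option S) →₀ ℤ) :=
  lmapDomain ℤ ℤ SumTriple.total - lmapDomain ℤ ℤ SumTriple.left -
    lmapDomain ℤ ℤ SumTriple.right

variable (X S) in
/-- The universal group with an additive map from partial functions `X → S`. -/
abbrev PartialSums : Type w :=
  ((X → Option S) →₀ ℤ) ⧸ LinearMap.range (relation X S)

/-- The class of a partial function. -/
noncomputable def cls (e : X → Option S) : PartialSums X S :=
  Submodule.Quotient.mk (single e 1)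

lemma cls_eq_add {A B C : X → Option S} (h : IsSum A B C) : cls A = cls B + cls C := by
  rw [cls, cls, cls, ← Submodule.Quotient.mk_add, Submodule.Quotient.eq]
  refine ⟨single ⟨A, B, C, h⟩ 1, ?_⟩
  simp [relation, sub_sub]

lemma cls_none : cls (fun _ : X => (none : Option S)) = 0 := by
  have h := cls_eq_add (X := X) (S := S) (A := fun _ => none) (B := fun _ => none)
    (C := fun _ => none) (fun _ => Or.inl ⟨rfl, rfl⟩)
  simpa using h

open Classical in
/-- The restriction of a partial function to a subset of its domain. -/
noncomputable def restrict (e : X → Option S) (p : X → Prop) : X → Option S :=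
  fun x => if p x then e x else none

lemma cls_restrict_mem {τ : Type*} (e : X → Option S) (t : X → τ) (B : Finset τ) :
    cls (restrict e (fun x => t x ∈ B)) = ∑ b ∈ B, cls (restrict e (fun x => t x = b)) := by
  classical
  induction B using Finset.induction_on with
  | empty =>
    simp only [Finset.notMem_empty, Finset.sum_empty, ← cls_none]
    congr 1
    funext x
    exact if_neg not_false
  | insert b B hb ih =>
    rw [Finset.sum_insert hb, ← ih]
    apply cls_eq_add
    intro x
    by_cases h : t x = b
    · right; subst h; simp [restrict, hb]
    · left; simp [restrict, h]

variable (X S) in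
/-- The multiplicity function of a formal sum of partial functions. -/
noncomputable def multiplicity : ((X → Option S) →₀ ℤ) →ₗ[ℤ] (X × S → ℤ) := by
  classical
  exact linearCombination ℤ (fun e p => if e p.1 = some p.2 then 1 else 0)

open Classical in
lemma multiplicity_apply (ξ : (X → Option S) →₀ ℤ) (x : X) (s : S) :
    multiplicity X S ξ (x, s) = ∑ e ∈ ξ.support with e x = some s, ξ e := by
  simp [multiplicity, linearCombination_apply, Finsupp.sum, Finset.sum_filter]

lemma mk_eq_sum_cls (ξ : (X → Option S) →₀ ℤ) :
    (Submodule.Quotient.mk ξ : PartialSums X S) = ∑ e ∈ ξ.support, ξ e • cls e := by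
  conv_lhs => rw [← ξ.sum_single]
  rw [Finsupp.sum, ← Submodule.mkQ_apply, map_sum]
  refine Finset.sum_congr rfl fun e _ => ?_
  rw [cls, ← Submodule.Quotient.mk_smul]
  simp

lemma mk_eq_zero_of_multiplicity_eq_zero {ξ : (X → Option S) →₀ ℤ}
    (h : multiplicity X S ξ = 0) : (Submodule.Quotient.mk ξ : PartialSums X S) = 0 := by
  classical
  set A := ξ.support with hA
  let t (e : X → Option S) (x : X) : Finset (X → Option S) := {e' ∈ A | e' x = e x}
  have key (e) (he : e ∈ A) :
      cls e = ∑ B ∈ A.powerset, cls (restrict e (fun x => t e x = B)) := by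
    rw [← cls_restrict_mem]
    congr 1
    funext x
    simp [restrict, t]
  rw [mk_eq_sum_cls, Finset.sum_congr rfl (fun e he => by rw [key e he, Finset.smul_sum]),
    Finset.sum_comm]
  refine Finset.sum_eq_zero fun B hB => ?_
  -- the restrictions of the members of `B` to the atom of `B` all agree
  have agree (e) (he : e ∈ B) (e') (he' : e' ∈ B) :
      restrict e (fun x => t e x = B) = restrict e' (fun x => t e' x = B) := by
    have aux (e) (he : e ∈ B) (e') (he' : e' ∈ B) (x) (hx : t e x = B) :
        e' x = e x := by
      rw [← hx] at he'
      exact (Finset.mem_filter.1 he').2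
    funext x
    by_cases h1 : t e x = B
    · have h3 := aux e he e' he' x h1
      have h2 : t e' x = B := by rw [← h1]; simp [t, h3]
      simp [restrict, h1, h2, h3]
    · by_cases h2 : t e' x = B
      · have h3 := aux e' he' e he x h2
        exact absurd (by rw [← h2]; simp [t, h3]) h1
      · simp [restrict, h1, h2]
  have vanish (e) (he : e ∈ A) (heB : e ∉ B) :
      cls (restrict e (fun x => t e x = B)) = 0 := by
    rw [← cls_none]
    congr 1
    funext x
    refine if_neg fun hx => heB ?_
    rw [← hx]
    exact Finset.mem_filter.2 ⟨he, rfl⟩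
  rw [← Finset.sum_subset (Finset.mem_powerset.1 hB)
    (fun e he heB => by rw [vanish e he heB, smul_zero])]
  rcases B.eq_empty_or_nonempty with rfl | ⟨e₀, he₀⟩
  · simp
  rw [Finset.sum_congr rfl (fun e he => by rw [agree e he e₀ he₀]), ← Finset.sum_smul]
  by_cases hne : ∃ x s, restrict e₀ (fun x => t e₀ x = B) x = some s
  · obtain ⟨x, s, hx⟩ := hne
    have h1 : t e₀ x = B := by
      by_contra h1
      simp [restrict, h1] at hx
    have h2 : e₀ x = some s := by simpa [restrict, h1] using hx
    have := congrFun h (x, s)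
    rw [multiplicity_apply, ← h2] at this
    rw [← h1]
    simp only [t]
    rw [hA, this]
    simp
  · have : restrict e₀ (fun x => t e₀ x = B) = fun _ => none := by
      funext x
      rw [Option.eq_none_iff_forall_ne_some]
      exact fun s hs => hne ⟨x, s, hs⟩
    rw [this, cls_none, smul_zero]

/-! ### Projectivity -/

variable (X S) in
open Classical in
/-- The points of `X × S`, together with a point at infinity, as families of truth values. -/
noncomputable def point (p : Option (X × S)) : (X → Option S) → Bool :=
  fun e => p.elim false fun q => decide (e q.1 = some q.2)

lemma point_some_eq_true {x : X} {s : S} {e : X → Option S} :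
    point X S (some (x, s)) e = true ↔ e x = some s := by
  simp [point]

variable (X S) in
/-- The closure of the set of points of `X × S` and the point at infinity. -/
def points : Set ((X → Option S) → Bool) := closure (Set.range (point X S))

open Profinite.NobelingProof in
variable (X S) in
/-- Formal sums of partial functions as locally constant functions. -/
noncomputable def toLC : ((X → Option S) →₀ ℤ) →ₗ[ℤ] LocallyConstant (points X S) ℤ :=
  linearCombination ℤ (e (points X S))

/-- The point at infinity. -/
noncomputable def infty : points X S := ⟨point X S none, subset_closure ⟨none, rfl⟩⟩

open Classical in
/-- The partial function whose graph is the intersection of two graphs. -/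
noncomputable def inter (e e' : X → Option S) : X → Option S :=
  restrict e (fun x => e x = e' x)

lemma points_property (f : Bool → Bool → Bool → Prop) (e₁ e₂ e₃ : X → Option S)
    (h : ∀ p, f (point X S p e₁) (point X S p e₂) (point X S p e₃)) (z : points X S) :
    f (z.1 e₁) (z.1 e₂) (z.1 e₃) := by
  have : IsClosed {z : (X → Option S) → Bool | f (z e₁) (z e₂) (z e₃)} := by
    have hc : Continuous fun z : (X → Option S) → Bool => (z e₁, z e₂, z e₃) := by fun_prop
    exact (isClosed_discrete {b : Bool × Bool × Bool | f b.1 b.2.1 b.2.2}).preimage hc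
  exact closure_minimal (by rintro _ ⟨p, rfl⟩; exact h p) this z.2

open Profinite.NobelingProof in
lemma e_mul_e (e₁ e₂ : X → Option S) :
    e (points X S) e₁ * e (points X S) e₂ = e (points X S) (inter e₁ e₂) := by
  ext z
  have := points_property (fun a b c => c = (a && b)) e₁ e₂ (inter e₁ e₂) (by
    intro p
    rcases p with _ | ⟨x, s⟩
    · simp [point]
    · rw [Bool.eq_iff_iff, Bool.and_eq_true, point_some_eq_true, point_some_eq_true,
        point_some_eq_true, inter, restrict]
      split_ifs with h1
      · rw [h1, and_self]
      · exact iff_of_false (by simp) fun h => h1 (h.1.trans h.2.symm)) z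
  simp only [LocallyConstant.mul_apply, e, LocallyConstant.coe_mk, this]
  cases z.1 e₁ <;> cases z.1 e₂ <;> simp

open Profinite.NobelingProof in
lemma span_one_e : Submodule.span ℤ
    (insert 1 (Set.range (e (points X S)))) = ⊤ := by
  classical
  let _ : LinearOrder (X → Option S) := WellOrderingRel.isWellOrder.linearOrder
  have : WellFoundedLT (X → Option S) := WellOrderingRel.isWellOrder.toIsWellFounded
  have h := (GoodProducts.span_iff_products (points X S)).1
    (GoodProducts.span (points X S) isClosed_closure)
  refine top_unique (h.trans (Submodule.span_mono ?_))
  rintro _ ⟨⟨l, hl⟩, rfl⟩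
  simp only [Products.eval]
  clear hl
  induction l with
  | nil => simp
  | cons a l ih =>
    simp only [List.map_cons, List.prod_cons]
    rcases ih with ih | ⟨b, ih⟩
    · rw [ih]; simp
    · rw [← ih, e_mul_e]; simp

open Profinite.NobelingProof in
lemma e_infty (a : X → Option S) : e (points X S) a infty = 0 := by
  simp [e, infty, point]

lemma toLC_infty (ξ : (X → Option S) →₀ ℤ) : toLC X S ξ infty = 0 := by
  induction ξ using Finsupp.induction_linear with
  | zero => simp
  | add f g hf hg => simp [hf, hg]
  | single a n => simp [toLC, e_infty]

lemma toLC_point (ξ : (X → Option S) →₀ ℤ) (p : X × S) :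
    toLC X S ξ ⟨point X S (some p), subset_closure ⟨some p, rfl⟩⟩ = multiplicity X S ξ p := by
  induction ξ using Finsupp.induction_linear with
  | zero => simp
  | add f g hf hg => simp [hf, hg]
  | single a n =>
    rw [toLC, multiplicity, linearCombination_single, linearCombination_single,
      LocallyConstant.smul_apply]
    by_cases h : a p.1 = .some p.2 <;> simp [Profinite.NobelingProof.e, point, h]

lemma toLC_relation (ζ : SumTriple X S →₀ ℤ) : toLC X S (relation X S ζ) = 0 := by
  induction ζ using Finsupp.induction_linear with
  | zero => simp
  | add f g hf hg => simp [hf, hg]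
  | single t n =>
    obtain ⟨A, B, C, h⟩ := t
    ext z
    have := points_property (fun a b c => a = (b || c) ∧ (b && c) = false) A B C (by
      intro p
      rcases p with _ | ⟨x, s⟩
      · simp [point]
      · rcases h x with ⟨h1, h2⟩ | ⟨h1, h2⟩
        · simp [point, h1, h2]
        · simp [point, h1, h2]) z
    simp only [relation, LinearMap.sub_apply, lmapDomain_apply, mapDomain_single, toLC, map_sub,
      linearCombination_single, LocallyConstant.sub_apply, LocallyConstant.smul_apply,
      Profinite.NobelingProof.e, LocallyConstant.coe_mk, this.1]
    have := this.2
    revert this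
    cases z.1 B <;> cases z.1 C <;> simp

instance : Module.Projective ℤ (PartialSums X S) := by
  classical
  have : CompactSpace (points X S) := isCompact_iff_compactSpace.1 isClosed_closure.isCompact
  let i : PartialSums X S →ₗ[ℤ] LocallyConstant (points X S) ℤ :=
    Submodule.liftQ _ (toLC X S) (by rintro _ ⟨ζ, rfl⟩; exact toLC_relation ζ)
  have hi : Function.Injective i := by
    rw [injective_iff_map_eq_zero]
    intro m hm
    obtain ⟨ξ, rfl⟩ := Submodule.Quotient.mk_surjective _ m
    refine mk_eq_zero_of_multiplicity_eq_zero (funext fun p => ?_)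
    rw [← toLC_point]
    exact DFunLike.congr_fun hm _
  let ev : LocallyConstant (points X S) ℤ →ₗ[ℤ] LocallyConstant (points X S) ℤ :=
    { toFun f := f - LocallyConstant.const _ (f infty)
      map_add' f g := by ext z; exact add_sub_add_comm _ _ _ _
      map_smul' n f := by ext z; exact (smul_sub n _ _).symm }
  have hev (f) : ev f ∈ LinearMap.range i := by
    have hf : f ∈ Submodule.span ℤ (insert 1 (Set.range
      (Profinite.NobelingProof.e (points X S)))) := by rw [span_one_e]; trivial
    induction hf using Submodule.span_induction with
    | mem f hf =>
      rcases hf with rfl | ⟨a, rfl⟩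
      · convert (LinearMap.range i).zero_mem
        ext z; exact sub_self (1 : ℤ)
      · refine ⟨cls a, ?_⟩
        ext z
        change toLC X S (single a 1) z = Profinite.NobelingProof.e _ a z -
          Profinite.NobelingProof.e _ a infty
        simp [e_infty, toLC]
    | zero => simp
    | add f g _ _ hf hg => rw [map_add]; exact add_mem hf hg
    | smul n f _ hf => rw [map_smul]; exact Submodule.smul_mem _ _ hf
  have : Module.Free ℤ (LocallyConstant (points X S) ℤ) :=
    LocallyConstant.freeOfProfinite (Profinite.of (points X S))
  refine Module.Projective.of_split i
    ((LinearEquiv.ofInjective i hi).symm.toLinearMap ∘ₗ ev.codRestrict _ hev) ?_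
  refine LinearMap.ext fun m => hi ?_
  obtain ⟨ξ, rfl⟩ := Submodule.Quotient.mk_surjective _ m
  simp only [LinearMap.comp_apply, LinearEquiv.coe_coe, LinearMap.id_apply]
  have h (y) : i ((LinearEquiv.ofInjective i hi).symm y) = y :=
    congrArg Subtype.val ((LinearEquiv.ofInjective i hi).apply_symm_apply y)
  rw [h]
  ext z
  change toLC X S ξ z - toLC X S ξ infty = toLC X S ξ z
  rw [toLC_infty, sub_zero]

end PartialMaps

section Extension

open Opposite Finsupp

variable {C : Type u} [Category.{v} C]

/-- The map induced by a function for a presheaf on the category of types. -/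
abbrev pb (D : (Type w)ᵒᵖ ⥤ C) {Y Z : Type w} (f : Y → Z) : D.obj (op Z) ⟶ D.obj (op Y) :=
  D.map (TypeCat.ofHom f).op

lemma pb_comp (D : (Type w)ᵒᵖ ⥤ C) {Y Z T : Type w} (f : Y → Z) (g : Z → T) :
    pb D g ≫ pb D f = pb D (g ∘ f) := by
  rw [pb, pb, ← D.map_comp]
  rfl

lemma pb_id (D : (Type w)ᵒᵖ ⥤ C) (Y : Type w) : pb D (id : Y → Y) = 𝟙 _ := D.map_id _

lemma pb_naturality {D E : (Type w)ᵒᵖ ⥤ C} (f : D ⟶ E) {Y Z : Type w} (g : Y → Z) :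
    pb D g ≫ f.app _ = f.app _ ≫ pb E g := f.naturality _

namespace LinExt

/-- A type large enough to index the supports of linear maps `M → ℤ[Y]`. -/
abbrev Bound (M : Type w) : Type w := ℕ × M

variable {M : Type w} [AddCommGroup M] {Y Z : Type w}

/-- Pushforward of a linear map to a free module along a function of bases. -/
noncomputable abbrev push (f : Y → Z) (h : M →ₗ[ℤ] (Y →₀ ℤ)) : M →ₗ[ℤ] (Z →₀ ℤ) :=
  lmapDomain ℤ ℤ f ∘ₗ h

lemma push_push {T : Type w} (f : Y → Z) (g : Z → T) (h : M →ₗ[ℤ] (Y →₀ ℤ)) :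
    push g (push f h) = push (g ∘ f) h := by
  rw [push, push, push, ← LinearMap.comp_assoc, ← lmapDomain_comp]

lemma push_id (h : M →ₗ[ℤ] (Y →₀ ℤ)) : push id h = h := by
  rw [push, lmapDomain_id, LinearMap.id_comp]

lemma push_injective {f : Y → Z} (hf : Function.Injective f) :
    Function.Injective (push f : (M →ₗ[ℤ] (Y →₀ ℤ)) → _) := fun h h' e => by
  ext m : 1
  exact mapDomain_injective hf (LinearMap.congr_fun e m)

/-- The support of a linear map `M → ℤ[Y]`. -/
def supp (h : M →ₗ[ℤ] (Y →₀ ℤ)) : Set Y := ⋃ m, ((h m).support : Set Y)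

lemma exists_push_eq (h : M →ₗ[ℤ] (Y →₀ ℤ)) {V : Set Y} (hV : supp h ⊆ V) :
    ∃ k : M →ₗ[ℤ] (V →₀ ℤ), push Subtype.val k = h := by
  have hm (m : M) : h m ∈ supported ℤ ℤ V := by
    rw [mem_supported]
    exact (Set.subset_iUnion (fun m => ((h m).support : Set Y)) m).trans hV
  refine ⟨lsubtypeDomain V ∘ₗ h, ?_⟩
  classical
  ext m : 1
  have := extendDomain_subtypeDomain (P := (· ∈ V)) (h m) fun a ha => hm m (by simpa using ha)
  rwa [extendDomain_eq_embDomain_subtype, embDomain_eq_mapDomain] at this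

lemma mk_supp_le (h : M →ₗ[ℤ] (Y →₀ ℤ)) : Cardinal.mk (supp h) ≤ Cardinal.mk (Bound M) := by
  refine (Cardinal.mk_iUnion_le_sum_mk).trans ?_
  refine (Cardinal.sum_le_sum _ (fun _ => Cardinal.aleph0) fun m => ?_).trans ?_
  · exact (Cardinal.lt_aleph0_of_finite _).le
  · simp [mul_comm]

lemma exists_equiv {M : Type w} {V : Set Y} (hV : Cardinal.mk V ≤ Cardinal.mk (Bound M)) :
    ∃ T : Set (Bound M), Nonempty (T ≃ V) := by
  obtain ⟨f⟩ := hV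
  exact ⟨Set.range f, ⟨(Equiv.ofInjective f f.injective).symm⟩⟩

/-- Every linear map `M → ℤ[Y]` comes from a subset of `Bound M`. -/
lemma exists_push_bound (h : M →ₗ[ℤ] (Y →₀ ℤ)) :
    ∃ (T : Set (Bound M)) (f : T → Y) (k : M →ₗ[ℤ] (T →₀ ℤ)), push f k = h := by
  obtain ⟨T, ⟨e⟩⟩ := exists_equiv (mk_supp_le h)
  obtain ⟨k, hk⟩ := exists_push_eq h subset_rfl
  refine ⟨T, Subtype.val ∘ e, push e.symm k, ?_⟩
  rw [push_push, Function.comp_assoc, Equiv.self_comp_symm, Function.comp_id, hk]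

/-- Two maps from subsets of `Bound M` factor through a common injective one. -/
lemma exists_common {T₁ T₂ : Set (Bound M)} (f₁ : T₁ → Y) (f₂ : T₂ → Y) :
    ∃ (T : Set (Bound M)) (f : T → Y) (g₁ : T₁ → T) (g₂ : T₂ → T),
      Function.Injective f ∧ f ∘ g₁ = f₁ ∧ f ∘ g₂ = f₂ := by
  have hV : Cardinal.mk ↑(Set.range f₁ ∪ Set.range f₂) ≤ Cardinal.mk (Bound M) := by
    refine (Cardinal.mk_union_le _ _).trans ?_
    refine (add_le_add Cardinal.mk_range_le Cardinal.mk_range_le).trans ?_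
    refine (add_le_add (Cardinal.mk_set_le _) (Cardinal.mk_set_le _)).trans ?_
    exact (Cardinal.add_eq_self (Cardinal.aleph0_le_mk _)).le
  obtain ⟨T, ⟨e⟩⟩ := exists_equiv hV
  refine ⟨T, Subtype.val ∘ e, fun t => e.symm ⟨f₁ t, Or.inl ⟨t, rfl⟩⟩,
    fun t => e.symm ⟨f₂ t, Or.inr ⟨t, rfl⟩⟩, Subtype.val_injective.comp e.injective, ?_, ?_⟩ <;>
  · funext t
    simp

variable [HasColimitsOfSize.{w, w} C]

/-- Coequalizers of small families of pairs of maps. -/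
lemma exists_coequalizer {ρ : Type w} {A : C} (B : ρ → C) (l r : ∀ k, B k ⟶ A) :
    ∃ (Q : C) (π : A ⟶ Q), (∀ k, l k ≫ π = r k ≫ π) ∧ Epi π ∧
      ∀ (Z : C) (f : A ⟶ Z), (∀ k, l k ≫ f = r k ≫ f) → ∃ g, π ≫ g = f := by
  have : HasColimitsOfSize.{0, 0} C := hasColimitsOfSizeShrink.{0, 0, w, w} C
  refine ⟨coequalizer (Sigma.desc l) (Sigma.desc r), coequalizer.π _ _, fun k => ?_,
    inferInstance, fun Z f hf => ⟨coequalizer.desc f ?_, coequalizer.π_desc _ _⟩⟩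
  · simpa using Sigma.ι B k ≫= coequalizer.condition (Sigma.desc l) (Sigma.desc r)
  · exact Sigma.hom_ext _ _ fun k => by simpa using hf k

variable [Preadditive C] (D : (Type w)ᵒᵖ ⥤ C)

variable (M) in
lemma exists_ext : ∃ (Q : C) (gen : ∀ T : Set (Bound M), (M →ₗ[ℤ] (T →₀ ℤ)) → (D.obj (op T) ⟶ Q)),
    (∀ (T T' : Set (Bound M)) (f : T → T') (h : M →ₗ[ℤ] (T →₀ ℤ)),
      pb D f ≫ gen T h = gen T' (push f h)) ∧
    (∀ T h h', gen T (h + h') = gen T h + gen T h') ∧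
    (∀ (A : C) (f g : Q ⟶ A), (∀ T h, gen T h ≫ f = gen T h ≫ g) → f = g) ∧
    ∀ (A : C) (θ : ∀ T : Set (Bound M), (M →ₗ[ℤ] (T →₀ ℤ)) → (D.obj (op T) ⟶ A)),
      (∀ (T T' : Set (Bound M)) (f : T → T') (h : M →ₗ[ℤ] (T →₀ ℤ)),
        pb D f ≫ θ T h = θ T' (push f h)) →
      (∀ T h h', θ T (h + h') = θ T h + θ T h') → ∃ f : Q ⟶ A, ∀ T h, gen T h ≫ f = θ T h := by
  let A₀ (g : Σ T : Set (Bound M), M →ₗ[ℤ] (T →₀ ℤ)) : C := D.obj (op g.1)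
  obtain ⟨Q₁, π₁, hπ₁, _, desc₁⟩ := exists_coequalizer (A := ∐ A₀)
    (ρ := Σ T : Set (Bound M) × Set (Bound M), (T.1 → T.2) × (M →ₗ[ℤ] (T.1 →₀ ℤ)))
    (fun r => D.obj (op r.1.2)) (fun r => pb D r.2.1 ≫ Sigma.ι A₀ ⟨r.1.1, r.2.2⟩)
    (fun r => Sigma.ι A₀ ⟨r.1.2, push r.2.1 r.2.2⟩)
  obtain ⟨Q, π, hπ, _, desc⟩ := exists_coequalizer (A := Q₁)
    (ρ := Σ T : Set (Bound M), (M →ₗ[ℤ] (T →₀ ℤ)) × (M →ₗ[ℤ] (T →₀ ℤ)))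
    (fun r => D.obj (op r.1)) (fun r => Sigma.ι A₀ ⟨r.1, r.2.1 + r.2.2⟩ ≫ π₁)
    (fun r => Sigma.ι A₀ ⟨r.1, r.2.1⟩ ≫ π₁ + Sigma.ι A₀ ⟨r.1, r.2.2⟩ ≫ π₁)
  refine ⟨Q, fun T h => Sigma.ι A₀ ⟨T, h⟩ ≫ π₁ ≫ π, fun T T' f h => ?_, fun T h h' => ?_,
    fun A f g hfg => ?_, fun A θ hθ hθ' => ?_⟩
  · simpa using hπ₁ ⟨(T, T'), f, h⟩ =≫ π
  · simpa using hπ ⟨T, h, h'⟩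
  · rw [← cancel_epi π, ← cancel_epi π₁]
    exact Sigma.hom_ext _ _ fun ⟨T, h⟩ => by simpa using hfg T h
  · obtain ⟨f₁, hf₁⟩ := desc₁ A (Sigma.desc fun g => θ g.1 g.2) fun ⟨⟨T, T'⟩, f, h⟩ => by
      simpa using hθ T T' f h
    obtain ⟨f, hf⟩ := desc A f₁ fun ⟨T, h, h'⟩ => by simpa [hf₁] using hθ' T h h'
    exact ⟨f, fun T h => by simp [hf, hf₁]⟩

variable (M) in
/-- The value at `M` of the universal extension of `D` to a contravariant additive functor on
abelian groups, along the free abelian group functor. -/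
noncomputable def Ext : C := (exists_ext M D).choose

/-- The generators of the extension. -/
noncomputable def gen (T : Set (Bound M)) (h : M →ₗ[ℤ] (T →₀ ℤ)) : D.obj (op T) ⟶ Ext M D :=
  (exists_ext M D).choose_spec.choose T h

lemma pb_gen {T T' : Set (Bound M)} (f : T → T') (h : M →ₗ[ℤ] (T →₀ ℤ)) :
    pb D f ≫ gen D T h = gen D T' (push f h) :=
  (exists_ext M D).choose_spec.choose_spec.1 T T' f h

lemma gen_add (T : Set (Bound M)) (h h' : M →ₗ[ℤ] (T →₀ ℤ)) :
    gen D T (h + h') = gen D T h + gen D T h' :=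
  (exists_ext M D).choose_spec.choose_spec.2.1 T h h'

variable {D} in
lemma hom_ext_gen {A : C} {f g : Ext M D ⟶ A}
    (h : ∀ (T : Set (Bound M)) (k : M →ₗ[ℤ] (T →₀ ℤ)), gen D T k ≫ f = gen D T k ≫ g) :
    f = g :=
  (exists_ext M D).choose_spec.choose_spec.2.2.1 A f g h

lemma exists_desc_gen {A : C} (θ : ∀ (T : Set (Bound M)), (M →ₗ[ℤ] (T →₀ ℤ)) → (D.obj (op T) ⟶ A))
    (hθ : ∀ (T T' : Set (Bound M)) (f : T → T') (h), pb D f ≫ θ T h = θ T' (push f h))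
    (hθ' : ∀ T h h', θ T (h + h') = θ T h + θ T h') :
    ∃ f : Ext M D ⟶ A, ∀ T h, gen D T h ≫ f = θ T h :=
  (exists_ext M D).choose_spec.choose_spec.2.2.2 A θ hθ hθ'

/-- The canonical map attached to a linear map `M → ℤ[Y]`. -/
noncomputable def inn (h : M →ₗ[ℤ] (Y →₀ ℤ)) : D.obj (op Y) ⟶ Ext M D :=
  pb D (exists_push_bound h).choose_spec.choose ≫ gen D _
    (exists_push_bound h).choose_spec.choose_spec.choose

lemma pb_gen_eq {T₁ T₂ : Set (Bound M)} {f₁ : T₁ → Y} {f₂ : T₂ → Y} {k₁ : M →ₗ[ℤ] (T₁ →₀ ℤ)}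
    {k₂ : M →ₗ[ℤ] (T₂ →₀ ℤ)} (h : push f₁ k₁ = push f₂ k₂) :
    pb D f₁ ≫ gen D T₁ k₁ = pb D f₂ ≫ gen D T₂ k₂ := by
  obtain ⟨T, f, g₁, g₂, hf, rfl, rfl⟩ := exists_common f₁ f₂
  rw [← pb_comp D g₁, ← pb_comp D g₂, Category.assoc, Category.assoc, pb_gen, pb_gen]
  rw [← push_push, ← push_push] at h
  rw [push_injective hf h]

lemma pb_gen_eq_inn {T : Set (Bound M)} (f : T → Y) (k : M →ₗ[ℤ] (T →₀ ℤ)) :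
    pb D f ≫ gen D T k = inn D (push f k) :=
  pb_gen_eq D (exists_push_bound (push f k)).choose_spec.choose_spec.choose_spec.symm

lemma gen_eq_inn (T : Set (Bound M)) (k : M →ₗ[ℤ] (T →₀ ℤ)) : gen D T k = inn D k := by
  have := pb_gen_eq_inn D id k
  rwa [pb_id, Category.id_comp, push_id] at this

lemma pb_inn (f : Y → Z) (h : M →ₗ[ℤ] (Y →₀ ℤ)) : pb D f ≫ inn D h = inn D (push f h) := by
  obtain ⟨T, g, k, rfl⟩ := exists_push_bound h
  rw [← pb_gen_eq_inn, ← Category.assoc, pb_comp, pb_gen_eq_inn, push_push]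

lemma inn_add (h h' : M →ₗ[ℤ] (Y →₀ ℤ)) : inn D (h + h') = inn D h + inn D h' := by
  obtain ⟨T₁, f₁, k₁, rfl⟩ := exists_push_bound h
  obtain ⟨T₂, f₂, k₂, rfl⟩ := exists_push_bound h'
  obtain ⟨T, f, g₁, g₂, -, rfl, rfl⟩ := exists_common f₁ f₂
  rw [← push_push, ← push_push, push, push, ← LinearMap.comp_add, ← pb_gen_eq_inn,
    ← pb_gen_eq_inn, ← pb_gen_eq_inn, gen_add, Preadditive.comp_add]

lemma inn_sub (h h' : M →ₗ[ℤ] (Y →₀ ℤ)) : inn D (h - h') = inn D h - inn D h' := by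
  rw [eq_sub_iff_add_eq, ← inn_add, sub_add_cancel]

variable {D} in
lemma Ext.hom_ext {A : C} {f g : Ext M D ⟶ A}
    (h : ∀ (Y : Type w) (k : M →ₗ[ℤ] (Y →₀ ℤ)), inn D k ≫ f = inn D k ≫ g) : f = g :=
  hom_ext_gen fun T k => by rw [gen_eq_inn, h]

lemma exists_desc {A : C} (θ : ∀ (Y : Type w), (M →ₗ[ℤ] (Y →₀ ℤ)) → (D.obj (op Y) ⟶ A))
    (hθ : ∀ {Y Z : Type w} (f : Y → Z) (h), pb D f ≫ θ Y h = θ Z (push f h))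
    (hθ' : ∀ Y h h', θ Y (h + h') = θ Y h + θ Y h') :
    ∃ f : Ext M D ⟶ A, ∀ (Y : Type w) (h : M →ₗ[ℤ] (Y →₀ ℤ)), inn D h ≫ f = θ Y h := by
  obtain ⟨f, hf⟩ := exists_desc_gen D (fun T => θ T) (fun _ _ f h => hθ f h) (fun T => hθ' T)
  refine ⟨f, fun Y h => ?_⟩
  obtain ⟨T, g, k, rfl⟩ := exists_push_bound h
  rw [← pb_gen_eq_inn, Category.assoc, hf, hθ]

variable {N : Type w} [AddCommGroup N] {L : Type w} [AddCommGroup L]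

lemma exists_map (μ : M →ₗ[ℤ] N) : ∃ f : Ext N D ⟶ Ext M D,
    ∀ (Y : Type w) (h : N →ₗ[ℤ] (Y →₀ ℤ)), inn D h ≫ f = inn D (h ∘ₗ μ) :=
  exists_desc D (fun Y h => inn D (h ∘ₗ μ)) (fun f h => by rw [pb_inn]; rfl)
    (fun Y h h' => by rw [LinearMap.add_comp, inn_add])

/-- The extension is contravariantly functorial in the group. -/
noncomputable def map (μ : M →ₗ[ℤ] N) : Ext N D ⟶ Ext M D := (exists_map D μ).choose

@[simp]
lemma inn_map (μ : M →ₗ[ℤ] N) (h : N →ₗ[ℤ] (Y →₀ ℤ)) :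
    inn D h ≫ map D μ = inn D (h ∘ₗ μ) := (exists_map D μ).choose_spec Y h

lemma map_id : map D (LinearMap.id : M →ₗ[ℤ] M) = 𝟙 _ := Ext.hom_ext fun Y k => by simp

lemma map_comp (μ : M →ₗ[ℤ] N) (ν : N →ₗ[ℤ] L) : map D ν ≫ map D μ = map D (ν ∘ₗ μ) :=
  Ext.hom_ext fun Y k => by
    rw [← Category.assoc, inn_map, inn_map, inn_map, LinearMap.comp_assoc]

lemma map_add (μ ν : M →ₗ[ℤ] N) : map D (μ + ν) = map D μ + map D ν :=
  Ext.hom_ext fun Y k => by simp [LinearMap.comp_add, inn_add]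

lemma map_zero : map D (0 : M →ₗ[ℤ] N) = 0 := by
  simpa using map_add D (0 : M →ₗ[ℤ] N) 0

end LinExt

end Extension

namespace PartialMaps

open Finsupp

variable {X S S' S'' : Type w}

lemma IsSum.comp {A B C : X → Option S} (h : IsSum A B C) {φ : Option S → Option S'}
    (hφ : φ none = none) : IsSum (φ ∘ A) (φ ∘ B) (φ ∘ C) := fun x => by
  rcases h x with ⟨h, h'⟩ | ⟨h, h'⟩
  · exact Or.inl ⟨by simp [h, hφ], by simp [h']⟩
  · exact Or.inr ⟨by simp [h, hφ], by simp [h']⟩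

lemma exists_pmap (X : Type w) {φ : Option S → Option S'} (hφ : φ none = none) :
    ∃ f : PartialSums X S →ₗ[ℤ] PartialSums X S', ∀ e, f (cls e) = cls (φ ∘ e) := by
  refine ⟨Submodule.mapQ _ _ (lmapDomain ℤ ℤ (φ ∘ ·)) ?_, fun e => ?_⟩
  · rintro _ ⟨ζ, rfl⟩
    induction ζ using Finsupp.induction_linear with
    | zero => simp
    | add f g hf hg => rw [_root_.map_add]; exact Submodule.add_mem _ hf hg
    | single t n =>
      refine ⟨single ⟨_, _, _, t.isSum.comp hφ⟩ n, ?_⟩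
      simp [relation, mapDomain_sub]
  · simp [cls]

/-- The map on formal sums of partial functions induced by a partial function. -/
noncomputable def pmap (X : Type w) {φ : Option S → Option S'} (hφ : φ none = none) :
    PartialSums X S →ₗ[ℤ] PartialSums X S' := (exists_pmap X hφ).choose

lemma pmap_cls {φ : Option S → Option S'} (hφ : φ none = none) (e : X → Option S) :
    pmap X hφ (cls e) = cls (φ ∘ e) := (exists_pmap X hφ).choose_spec e

lemma hom_ext_cls {N : Type*} [AddCommGroup N] {f g : PartialSums X S →ₗ[ℤ] N}
    (h : ∀ e, f (cls e) = g (cls e)) : f = g := by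
  apply Submodule.linearMap_qext
  ext e
  exact h e

lemma pmap_comp {φ : Option S → Option S'} (hφ : φ none = none) {χ : Option S' → Option S''}
    (hχ : χ none = none) :
    pmap X hχ ∘ₗ pmap X hφ = pmap X (φ := χ ∘ φ) (by simp [hφ, hχ]) :=
  hom_ext_cls fun e => by simp [pmap_cls, Function.comp_assoc]

lemma pmap_id : pmap X (φ := (id : Option S → Option S)) rfl = LinearMap.id :=
  hom_ext_cls fun e => by simp [pmap_cls]

lemma pmap_zero {φ : Option S → Option S'} (hφ : ∀ x, φ x = none) : pmap X (hφ none) = 0 :=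
  hom_ext_cls fun e => by
    rw [pmap_cls, LinearMap.zero_apply, ← cls_none]
    exact congrArg cls (funext fun x => hφ _)

lemma pmap_eq_add {α β γ : Option S → Option S'} (h : IsSum α β γ) (hα : α none = none)
    (hβ : β none = none) (hγ : γ none = none) : pmap X hα = pmap X hβ + pmap X hγ :=
  hom_ext_cls fun e => by
    simp only [LinearMap.add_apply, pmap_cls]
    exact cls_eq_add fun x => h (e x)

end PartialMaps

section

open Opposite Finsupp PartialMaps LinExt

variable {C : Type u} [Category.{v} C]

/-- A binary fan of sets of the form `A → Z ← B` with `A ⊔ B ≃ Z` is a limit in the opposite. -/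
noncomputable def typeOpFanIsLimit {A B Z : Type w} {i : A → Z} {j : B → Z}
    (h : Function.Bijective (Sum.elim i j)) :
    IsLimit (BinaryFan.mk (TypeCat.ofHom i).op (TypeCat.ofHom j).op) :=
  BinaryCofan.IsColimit.op (c := BinaryCofan.mk (TypeCat.ofHom i) (TypeCat.ofHom j)) <|
    IsColimit.ofIsoColimit (Types.binaryCoproductColimit A B) <|
      Cocone.ext (Equiv.ofBijective _ h).toIso (by rintro ⟨_ | _⟩ <;> rfl)

lemma preservesFiniteProducts_of_sum [HasZeroObject C] {G : (Type w)ᵒᵖ ⥤ C}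
    (h₀ : IsZero (G.obj (op PEmpty)))
    (h : ∀ A B : Type w, Nonempty (IsLimit
      (BinaryFan.mk (pb G (Sum.inl : A → A ⊕ B)) (pb G (Sum.inr : B → A ⊕ B))))) :
    PreservesFiniteProducts G := by
  have : PreservesLimit (Functor.empty.{0} (Type w)ᵒᵖ) G := by
    refine preservesLimit_of_preserves_limit_cone
      (terminalOpOfInitial Types.isInitialPEmpty) ?_
    exact (isLimitMapConeEmptyConeEquiv G _).symm h₀.isTerminal
  have := preservesLimitsOfShape_pempty_of_preservesTerminal G
  have (A B : Type w) : PreservesLimit (pair (op A) (op B)) G :=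
    preservesLimit_of_preserves_limit_cone
      (typeOpFanIsLimit (i := (Sum.inl : A → A ⊕ B)) (j := Sum.inr)
        (by rw [Sum.elim_inl_inr]; exact Function.bijective_id))
      ((isLimitMapConeBinaryFanEquiv G _ _).symm (h A B).some)
  have : PreservesLimitsOfShape (Discrete WalkingPair) G :=
    ⟨fun {K} => preservesLimit_of_iso_diagram G (diagramIsoPair K).symm⟩
  exact .of_preserves_binary_and_terminal G

/-- Precomposition of a presheaf on sets with `Y ↦ Y × X`. -/
@[simps]
def prodPre (P : (Type w)ᵒᵖ ⥤ C) (X : Type w) : (Type w)ᵒᵖ ⥤ C where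
  obj Y := P.obj (op (Y.unop × X))
  map f := pb P (Prod.map f.unop id)
  map_id Y := P.map_id _
  map_comp f g := by rw [pb_comp]; rfl

variable [Preadditive C] [HasColimitsOfSize.{w, w} C]

section emap

variable (P : (Type w)ᵒᵖ ⥤ C) (X : Type w) {S S' S'' : Type w}

/-- The extension of a presheaf applied to the map induced by a partial function. -/
noncomputable def emap {φ : Option S → Option S'} (hφ : φ none = none) :
    Ext (PartialSums X S') (prodPre P X) ⟶ Ext (PartialSums X S) (prodPre P X) :=
  LinExt.map _ (pmap X hφ)

lemma emap_comp {φ : Option S → Option S'} (hφ : φ none = none) {χ : Option S' → Option S''}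
    (hχ : χ none = none) :
    emap P X hχ ≫ emap P X hφ = emap P X (φ := χ ∘ φ) (by simp [hφ, hχ]) := by
  rw [emap, emap, LinExt.map_comp, pmap_comp]
  rfl

lemma emap_eq_id {φ : Option S → Option S} (h : φ = id) (hφ : φ none = none) :
    emap P X hφ = 𝟙 _ := by
  subst h
  rw [emap, pmap_id, LinExt.map_id]

lemma emap_eq_zero {φ : Option S → Option S'} (hφ : ∀ x, φ x = none) :
    emap P X (hφ none) = 0 := by
  rw [emap, pmap_zero hφ, LinExt.map_zero]

lemma emap_eq_add {α β γ : Option S → Option S'} (h : IsSum α β γ) (hα : α none = none)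
    (hβ : β none = none) (hγ : γ none = none) :
    emap P X hα = emap P X hβ + emap P X hγ := by
  rw [emap, pmap_eq_add h hα hβ hγ, LinExt.map_add]
  rfl

lemma emap_congr {φ χ : Option S → Option S'} (h : φ = χ) (hφ : φ none = none) :
    emap P X hφ = emap P X (φ := χ) (h ▸ hφ) := by
  subst h; rfl

end emap

/-- The values of the extension of `P` on formal sums of partial functions. -/
noncomputable def sumsPresheaf (P : (Type w)ᵒᵖ ⥤ C) (X : Type w) : (Type w)ᵒᵖ ⥤ C where
  obj S := Ext (PartialSums X S.unop) (prodPre P X)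
  map f := emap P X (φ := Option.map f.unop) rfl
  map_id S := emap_eq_id P X Option.map_id _
  map_comp f g := by
    rw [emap_comp]
    exact emap_congr P X (by ext1 (_ | _) <;> rfl) _

lemma sumsPresheaf_preservesFiniteProducts [HasZeroObject C] (P : (Type w)ᵒᵖ ⥤ C) (X : Type w) :
    PreservesFiniteProducts (sumsPresheaf P X) := by
  refine preservesFiniteProducts_of_sum ?_ fun A B => ?_
  · rw [IsZero.iff_id_eq_zero]
    exact (emap_eq_id P X rfl _).symm.trans (emap_eq_zero P X (by rintro (_ | ⟨⟨⟩⟩); rfl))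
  · let pl : Option (A ⊕ B) → Option A := fun x => x.bind Sum.getLeft?
    let pr : Option (A ⊕ B) → Option B := fun x => x.bind Sum.getRight?
    let b : BinaryBicone ((sumsPresheaf P X).obj (op A)) ((sumsPresheaf P X).obj (op B)) :=
      { pt := (sumsPresheaf P X).obj (op (A ⊕ B))
        fst := pb _ Sum.inl
        snd := pb _ Sum.inr
        inl := emap P X (φ := pl) rfl
        inr := emap P X (φ := pr) rfl
        inl_fst := (emap_comp P X _ _).trans (emap_eq_id P X (by ext1 (_ | _) <;> rfl) _)
        inl_snd := (emap_comp P X _ _).trans (emap_eq_zero P X (by rintro (_ | _) <;> rfl))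
        inr_fst := (emap_comp P X _ _).trans (emap_eq_zero P X (by rintro (_ | _) <;> rfl))
        inr_snd := (emap_comp P X _ _).trans (emap_eq_id P X (by ext1 (_ | _) <;> rfl) _) }
    refine ⟨(isBinaryBilimitOfTotal b ?_).isLimit⟩
    refine (congrArg₂ _ (emap_comp P X _ _) (emap_comp P X _ _)).trans ?_
    refine ((emap_eq_add P X ?_ _ _ _).symm).trans (emap_eq_id P X rfl rfl)
    rintro (_ | _ | _)
    · exact Or.inl ⟨rfl, rfl⟩
    · exact Or.inr ⟨rfl, rfl⟩
    · exact Or.inl ⟨rfl, rfl⟩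

end

section

open Opposite Finsupp PartialMaps LinExt

variable {C : Type u} [Category.{v} C]

section extendZero

variable (F : (Type w)ᵒᵖ ⥤ C) [PreservesFiniteProducts F]

/-- A presheaf on sets preserving finite products turns disjoint unions to products. -/
noncomputable def pbFanIsLimit {A B Z : Type w} {i : A → Z} {j : B → Z}
    (h : Function.Bijective (Sum.elim i j)) : IsLimit (BinaryFan.mk (pb F i) (pb F j)) :=
  isLimitMapConeBinaryFanEquiv F _ _ (isLimitOfPreserves F (typeOpFanIsLimit h))

lemma elim_some_none_bijective (S : Type w) :
    Function.Bijective (Sum.elim (.some : S → Option S) (fun _ : PUnit.{w + 1} => none)) :=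
  ⟨by rintro (_ | _) (_ | _) <;> simp, by
    rintro (_ | s)
    exacts [⟨Sum.inr ⟨⟩, rfl⟩, ⟨Sum.inl s, rfl⟩]⟩

lemma elim_val_val_bijective {X : Type w} (p : X → Prop) :
    Function.Bijective (Sum.elim (Subtype.val : {x // p x} → X)
      (Subtype.val : {x // ¬ p x} → X)) := by
  classical
  exact (Equiv.sumCompl p).bijective

variable {F} in
lemma hom_ext_option {A : C} {S : Type w} {f g : A ⟶ F.obj (op (Option S))}
    (h : f ≫ pb F .some = g ≫ pb F .some)
    (h' : f ≫ pb F (fun _ : PUnit.{w + 1} => none) = g ≫ pb F (fun _ => none)) : f = g :=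
  BinaryFan.IsLimit.hom_ext (pbFanIsLimit F (elim_some_none_bijective S)) h h'

variable {F} in
lemma hom_ext_compl {A : C} {X : Type w} (p : X → Prop) {f g : A ⟶ F.obj (op X)}
    (h : f ≫ pb F (Subtype.val : {x // p x} → X) = g ≫ pb F Subtype.val)
    (h' : f ≫ pb F (Subtype.val : {x // ¬ p x} → X) = g ≫ pb F Subtype.val) : f = g :=
  BinaryFan.IsLimit.hom_ext (pbFanIsLimit F (elim_val_val_bijective p)) h h'

variable [Preadditive C]

/-- Extension by zero. -/
noncomputable def extendZero (S : Type w) : F.obj (op S) ⟶ F.obj (op (Option S)) :=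
  (pbFanIsLimit F (elim_some_none_bijective S)).lift (BinaryFan.mk (𝟙 _) 0)

lemma extendZero_some (S : Type w) : extendZero F S ≫ pb F .some = 𝟙 _ :=
  (pbFanIsLimit F (elim_some_none_bijective S)).fac _ ⟨.left⟩

lemma extendZero_none (S : Type w) :
    extendZero F S ≫ pb F (fun _ : PUnit.{w + 1} => none) = 0 :=
  (pbFanIsLimit F (elim_some_none_bijective S)).fac _ ⟨.right⟩

lemma extendZero_const_none (S X : Type w) : extendZero F S ≫ pb F (fun _ : X => none) = 0 := by
  have := pb_comp F (fun _ : X => PUnit.unit.{w + 1}) (fun _ => (none : Option S))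
  rw [Function.comp_def] at this
  rw [← this, ← Category.assoc, extendZero_none, zero_comp]

variable {F}

variable (F) in
lemma extendZero_pb {S S' : Type w} (φ : S → S') :
    extendZero F S' ≫ pb F (Option.map φ) = pb F φ ≫ extendZero F S := by
  apply hom_ext_option
  · rw [Category.assoc, Category.assoc, extendZero_some, Category.comp_id, pb_comp]
    change _ ≫ pb F (Option.some ∘ φ) = _
    rw [← pb_comp, ← Category.assoc, extendZero_some, Category.id_comp]
  · rw [Category.assoc, Category.assoc, extendZero_none, comp_zero, pb_comp]
    exact extendZero_none F S'

lemma extendZero_naturality {G : (Type w)ᵒᵖ ⥤ C} [PreservesFiniteProducts G] (f : F ⟶ G)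
    (S : Type w) : extendZero F S ≫ f.app _ = f.app _ ≫ extendZero G S := by
  apply hom_ext_option
  · rw [Category.assoc, Category.assoc, extendZero_some, ← pb_naturality, ← Category.assoc,
      extendZero_some, Category.id_comp, Category.comp_id]
  · rw [Category.assoc, Category.assoc, extendZero_none, ← pb_naturality, ← Category.assoc,
      extendZero_none, zero_comp, comp_zero]

variable (F) in
lemma extendZero_isSum {X S : Type w} {A B D : X → Option S} (h : IsSum A B D) :
    extendZero F S ≫ pb F A = extendZero F S ≫ pb F B + extendZero F S ≫ pb F D := by
  apply hom_ext_compl (fun x => B x = none)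
  · rw [Preadditive.add_comp, Category.assoc, Category.assoc, Category.assoc, pb_comp, pb_comp,
      pb_comp]
    have hB : B ∘ Subtype.val = fun x : {x // B x = none} => none := funext fun x => x.2
    have hA : A ∘ Subtype.val = fun x : {x // B x = none} => D x := funext fun x => by
      rcases h x with h | h
      · exact h.2
      · exact h.2.trans (x.2.trans h.1.symm)
    rw [hB, hA, extendZero_const_none, zero_add]
  · rw [Preadditive.add_comp, Category.assoc, Category.assoc, Category.assoc, pb_comp, pb_comp,
      pb_comp]
    have hD : D ∘ Subtype.val = fun x : {x // ¬ B x = none} => none := funext fun x => by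
      rcases h x with h | h
      · exact (x.2 h.1).elim
      · exact h.1
    have hA : A ∘ Subtype.val = fun x : {x // ¬ B x = none} => B x := funext fun x => by
      rcases h x with h | h
      · exact (x.2 h.1).elim
      · exact h.2
    rw [hD, hA, extendZero_const_none, add_zero]

end extendZero

/-- Precomposition of a presheaf on sets with the functor adding a point. -/
@[simps]
def optionPre (P : (Type w)ᵒᵖ ⥤ C) : (Type w)ᵒᵖ ⥤ C where
  obj S := P.obj (op (Option S.unop))
  map f := pb P (Option.map f.unop)
  map_id S := (congrArg (pb P) Option.map_id).trans (pb_id P _)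
  map_comp f g := by
    rw [pb_comp]
    exact congrArg (pb P) (by ext1 (_ | _) <;> rfl)

/-- Restriction from `Option S` to `S`. -/
@[simps]
def optionPreSome (P : (Type w)ᵒᵖ ⥤ C) : optionPre P ⟶ P where
  app _ := pb P .some
  naturality _ _ f :=
    (pb_comp P Option.some (Option.map f.unop)).trans (pb_comp P f.unop Option.some).symm

/-- Functoriality of `optionPre`. -/
@[simps]
def optionPreMap {P Q : (Type w)ᵒᵖ ⥤ C} (f : P ⟶ Q) : optionPre P ⟶ optionPre Q where
  app _ := f.app _
  naturality _ _ _ := f.naturality _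

/-- Extension by zero, as a natural transformation. -/
@[simps]
noncomputable def extendZeroHom [Preadditive C] (F : (Type w)ᵒᵖ ⥤ C) [PreservesFiniteProducts F] :
    F ⟶ optionPre F where
  app S := extendZero F S.unop
  naturality _ _ f := (extendZero_pb F f.unop).symm

variable [Preadditive C] [HasColimitsOfSize.{w, w} C]

/-- The values of the extension of `P` on free groups on sets of partial functions. -/
noncomputable def freePresheaf (P : (Type w)ᵒᵖ ⥤ C) (X : Type w) : (Type w)ᵒᵖ ⥤ C where
  obj S := Ext ((X → Option S.unop) →₀ ℤ) (prodPre P X)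
  map f := LinExt.map _ (lmapDomain ℤ ℤ (Option.map f.unop ∘ ·))
  map_id S := by
    refine Eq.trans ?_ (LinExt.map_id _)
    congr 1
    refine Eq.trans ?_ (lmapDomain_id _ _)
    congr 1
    funext e
    exact congrArg (· ∘ e) Option.map_id
  map_comp f g := by
    rw [LinExt.map_comp, ← lmapDomain_comp]
    congr 2
    funext e x
    exact (Option.map_map f.unop g.unop (e x)).symm

variable (P : (Type w)ᵒᵖ ⥤ C) (X : Type w)

/-- Evaluation of partial functions. -/
abbrev evalPartial (X S : Type w) : (X → Option S) × X → Option S := fun p => p.1 p.2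

section innProd

variable {M N Y Z : Type w} [AddCommGroup M] [AddCommGroup N]

/-- The canonical maps to the extension of `prodPre P X`. -/
noncomputable def innProd (h : M →ₗ[ℤ] (Y →₀ ℤ)) :
    P.obj (op (Y × X)) ⟶ Ext M (prodPre P X) := inn (prodPre P X) h

lemma innProd_map (h : M →ₗ[ℤ] (Y →₀ ℤ)) (μ : N →ₗ[ℤ] M) :
    innProd P X h ≫ LinExt.map _ μ = innProd P X (h ∘ₗ μ) := inn_map _ _ _

lemma pb_innProd (f : Y → Z) (h : M →ₗ[ℤ] (Y →₀ ℤ)) :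
    pb P (Prod.map f id) ≫ innProd P X h = innProd P X (push f h) :=
  pb_inn (prodPre P X) f h

lemma innProd_sub (h h' : M →ₗ[ℤ] (Y →₀ ℤ)) :
    innProd P X (h - h') = innProd P X h - innProd P X h' := inn_sub _ _ _

lemma exists_desc_innProd {A : C}
    (θ : ∀ (Y : Type w), (M →ₗ[ℤ] (Y →₀ ℤ)) → (P.obj (op (Y × X)) ⟶ A))
    (hθ : ∀ {Y Z : Type w} (f : Y → Z) (h),
      pb P (Prod.map f (id : X → X)) ≫ θ Y h = θ Z (push f h))
    (hθ' : ∀ Y h h', θ Y (h + h') = θ Y h + θ Y h') :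
    ∃ f : Ext M (prodPre P X) ⟶ A, ∀ (Y : Type w) (h : M →ₗ[ℤ] (Y →₀ ℤ)),
      innProd P X h ≫ f = θ Y h :=
  exists_desc (prodPre P X) θ hθ hθ'

end innProd

/-- The map to `Ext M` attached to a linear map to a free group on partial functions. -/
noncomputable def toExt {S : Type w} {M : Type w} [AddCommGroup M]
    (h : M →ₗ[ℤ] ((X → Option S) →₀ ℤ)) : P.obj (op (Option S)) ⟶ Ext M (prodPre P X) :=
  pb P (evalPartial X S) ≫ innProd P X h

variable {P X} in
lemma toExt_map {S : Type w} {M N : Type w} [AddCommGroup M] [AddCommGroup N]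
    (h : M →ₗ[ℤ] ((X → Option S) →₀ ℤ)) (μ : N →ₗ[ℤ] M) :
    toExt P X h ≫ LinExt.map _ μ = toExt P X (h ∘ₗ μ) := by
  rw [toExt, toExt, Category.assoc, innProd_map]

variable {P X} in
lemma pb_toExt {S S' : Type w} {M : Type w} [AddCommGroup M]
    (h : M →ₗ[ℤ] ((X → Option S) →₀ ℤ)) (φ : S → S') :
    pb P (Option.map φ) ≫ toExt P X h = toExt P X (push (Option.map φ ∘ ·) h) := by
  rw [toExt, toExt, ← pb_innProd, ← Category.assoc, ← Category.assoc, pb_comp, pb_comp]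

/-- The canonical map to the extension on the free group. -/
noncomputable def toFree : optionPre P ⟶ freePresheaf P X where
  app S := toExt P X LinearMap.id
  naturality S T f := by
    refine (pb_toExt _ _).trans (Eq.trans ?_ (toExt_map _ _).symm)
    rfl

lemma exists_toFree_comp {S : Type w} (e : X → Option S) :
    ∃ r : (freePresheaf P X).obj (op S) ⟶ P.obj (op X),
      (toFree P X).app (op S) ≫ r = pb P e := by
  obtain ⟨r, hr⟩ := exists_desc_innProd P X (M := (X → Option S) →₀ ℤ) (A := P.obj (op X))
    (fun Y h => linearCombination ℤ (fun y : Y => pb P (fun x : X => (y, x))) (h (single e 1)))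
    (fun {Y Z} f h => by
      rw [push, LinearMap.comp_apply, lmapDomain_apply, linearCombination_mapDomain]
      generalize h (single e 1) = ξ
      induction ξ using Finsupp.induction_linear with
      | zero => simp
      | add a b ha hb => rw [_root_.map_add, _root_.map_add, Preadditive.comp_add, ha, hb]
      | single y n =>
        simp only [linearCombination_single, Preadditive.comp_zsmul]
        congr 1
        exact pb_comp P _ _)
    (fun Y h h' => by rw [LinearMap.add_apply, _root_.map_add])
  refine ⟨r, ?_⟩
  change (pb P (evalPartial X S) ≫ innProd P X LinearMap.id) ≫ r = _
  rw [Category.assoc, hr, LinearMap.id_apply, linearCombination_single, one_smul]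
  exact pb_comp P _ _

/-- The map of extensions induced by the quotient map from the free group. -/
noncomputable def sumsToFree : sumsPresheaf P X ⟶ freePresheaf P X where
  app S := LinExt.map _ (LinearMap.range (relation X S.unop)).mkQ
  naturality S T f := by
    refine (LinExt.map_comp _ _ _).trans (Eq.trans ?_ (LinExt.map_comp _ _ _).symm)
    congr 1
    ext e
    exact (pmap_cls _ _).trans (by simp [cls])

variable {P}
variable {F : (Type w)ᵒᵖ ⥤ C} [PreservesFiniteProducts F] (f : F ⟶ P)

/-- Extension by zero followed by `toExt`. -/
noncomputable def zeroToExt {S : Type w} {M : Type w} [AddCommGroup M]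
    (h : M →ₗ[ℤ] ((X → Option S) →₀ ℤ)) : F.obj (op S) ⟶ Ext M (prodPre P X) :=
  extendZero F S ≫ f.app _ ≫ toExt P X h

variable {X}

lemma zeroToExt_map {S M N : Type w} [AddCommGroup M] [AddCommGroup N]
    (h : M →ₗ[ℤ] ((X → Option S) →₀ ℤ)) (μ : N →ₗ[ℤ] M) :
    zeroToExt X f h ≫ LinExt.map _ μ = zeroToExt X f (h ∘ₗ μ) := by
  rw [zeroToExt, zeroToExt, ← toExt_map, Category.assoc, Category.assoc]

lemma pb_zeroToExt {S S' M : Type w} [AddCommGroup M]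
    (h : M →ₗ[ℤ] ((X → Option S) →₀ ℤ)) (φ : S → S') :
    pb F φ ≫ zeroToExt X f h = zeroToExt X f (push (Option.map φ ∘ ·) h) := by
  rw [zeroToExt, zeroToExt, ← pb_toExt, ← Category.assoc (f.app _), ← pb_naturality,
    Category.assoc, ← Category.assoc (extendZero F S'), extendZero_pb, Category.assoc]

lemma zeroToExt_relation_comp {S : Type w} {M : Type w} [AddCommGroup M]
    (k : M →ₗ[ℤ] (SumTriple X S →₀ ℤ)) : zeroToExt X f (relation X S ∘ₗ k) = 0 := by
  have key (t : SumTriple X S → X → Option S) :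
      zeroToExt X f (lmapDomain ℤ ℤ t ∘ₗ k) =
        extendZero F S ≫ pb F (fun p : SumTriple X S × X => t p.1 p.2) ≫ f.app _ ≫
          innProd P X k := by
    change extendZero F S ≫ f.app _ ≫ pb P _ ≫ innProd P X (push t k) = _
    rw [← pb_innProd]
    congr 1
    rw [← Category.assoc, ← Category.assoc, ← Category.assoc]
    congr 1
    rw [Category.assoc, pb_comp]
    exact (pb_naturality _ _).symm
  have hsub (a b : M →ₗ[ℤ] ((X → Option S) →₀ ℤ)) :
      zeroToExt X f (a - b) = zeroToExt X f a - zeroToExt X f b := by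
    simp only [zeroToExt, toExt, innProd_sub, Preadditive.comp_sub]
  rw [relation, LinearMap.sub_comp, LinearMap.sub_comp, hsub, hsub, key, key, key,
    ← Category.assoc, extendZero_isSum F (A := fun p : SumTriple X S × X => p.1.total p.2)
      (B := fun p => p.1.left p.2) (D := fun p => p.1.right p.2) (fun p => p.1.isSum p.2),
    Preadditive.add_comp, Category.assoc, Category.assoc]
  abel

lemma zeroToExt_congr {S : Type w} {M : Type w} [AddCommGroup M] [Module.Projective ℤ M]
    {h h' : M →ₗ[ℤ] ((X → Option S) →₀ ℤ)}
    (hh : (LinearMap.range (relation X S)).mkQ ∘ₗ h =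
      (LinearMap.range (relation X S)).mkQ ∘ₗ h') :
    zeroToExt X f h = zeroToExt X f h' := by
  have hmem (m : M) : (h - h') m ∈ LinearMap.range (relation X S) := by
    rw [LinearMap.sub_apply, ← Submodule.Quotient.eq]
    exact LinearMap.congr_fun hh m
  obtain ⟨k, hk⟩ := Module.projective_lifting_property (relation X S).rangeRestrict
    ((h - h').codRestrict _ hmem) (LinearMap.surjective_rangeRestrict _)
  have hk' : relation X S ∘ₗ k = h - h' := by
    ext1 m
    exact congrArg Subtype.val (LinearMap.congr_fun hk m)
  have := zeroToExt_relation_comp f k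
  rw [hk', ← sub_self (zeroToExt X f h')] at this
  rw [← sub_eq_zero, ← sub_self (zeroToExt X f h'), ← this]
  simp only [zeroToExt, toExt, innProd_sub, Preadditive.comp_sub]

lemma exists_section (X S : Type w) : ∃ σ : PartialSums X S →ₗ[ℤ] ((X → Option S) →₀ ℤ),
    (LinearMap.range (relation X S)).mkQ ∘ₗ σ = LinearMap.id :=
  Module.projective_lifting_property _ _ (Submodule.mkQ_surjective _)

/-- A section of the projection from the free group on partial functions. -/
noncomputable def sectionSums (X S : Type w) : PartialSums X S →ₗ[ℤ] ((X → Option S) →₀ ℤ) :=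
  (exists_section X S).choose

lemma mkQ_comp_sectionSums (X S : Type w) :
    (LinearMap.range (relation X S)).mkQ ∘ₗ sectionSums X S = LinearMap.id :=
  (exists_section X S).choose_spec

lemma mkQ_comp_lmapDomain {S S' : Type w} (φ : S → S') :
    (LinearMap.range (relation X S')).mkQ ∘ₗ lmapDomain ℤ ℤ (Option.map φ ∘ ·) =
      pmap X (φ := Option.map φ) rfl ∘ₗ (LinearMap.range (relation X S)).mkQ := by
  ext e
  exact Eq.symm ((pmap_cls _ _).trans (by simp [cls]))

variable (X) in
/-- A map from a product-preserving presheaf to an arbitrary one induces a map to its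
presheaf of sums. -/
noncomputable def toSums : F ⟶ sumsPresheaf P X where
  app S := zeroToExt X f (sectionSums X S.unop)
  naturality S T g := by
    refine (pb_zeroToExt f _ g.unop).trans
      (Eq.trans (zeroToExt_congr f ?_) (zeroToExt_map f _ _).symm)
    rw [push, ← LinearMap.comp_assoc, mkQ_comp_lmapDomain, LinearMap.comp_assoc,
      mkQ_comp_sectionSums, ← LinearMap.comp_assoc, mkQ_comp_sectionSums, LinearMap.comp_id,
      LinearMap.id_comp]

lemma toSums_sumsToFree :
    toSums X f ≫ sumsToFree P X = extendZeroHom F ≫ optionPreMap f ≫ toFree P X := by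
  ext S
  refine (zeroToExt_map f _ _).trans ((zeroToExt_congr f (h' := LinearMap.id) ?_).trans rfl)
  rw [← LinearMap.comp_assoc, mkQ_comp_sectionSums, LinearMap.id_comp, LinearMap.comp_id]

lemma toSums_comp {G : (Type w)ᵒᵖ ⥤ C} [PreservesFiniteProducts G] (g : G ⟶ F) :
    toSums X (g ≫ f) = g ≫ toSums X f := by
  ext S
  change extendZero G _ ≫ (g.app _ ≫ f.app _) ≫ toExt P X _ =
    g.app _ ≫ extendZero F _ ≫ f.app _ ≫ toExt P X _
  rw [← Category.assoc (g.app S), ← extendZero_naturality, Category.assoc, Category.assoc]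

end

section

open Opposite

variable {C : Type u} [Category.{v} C]

/-- Descent of a factorization along a family of transformations, each component of which is
split mono for some index. -/
lemma exists_desc_of_isSplitMono {E : Type*} [Category* E] [HasPushouts C] {J : Type*} [Category* J]
    {K : J ⥤ E ⥤ C} {c : Cocone K}
    (hc : ∀ (N : E ⥤ C) (f g : c.pt ⟶ N), (∀ j, c.ι.app j ≫ f = c.ι.app j ≫ g) → f = g)
    (s : Cocone K) {I : Type*} {Q : I → (E ⥤ C)} (k : ∀ i, s.pt ⟶ Q i)
    (hk : ∀ S, ∃ i, IsSplitMono ((k i).app S)) (g : ∀ i, c.pt ⟶ Q i)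
    (hg : ∀ i j, c.ι.app j ≫ g i = s.ι.app j ≫ k i) :
    ∃ d : c.pt ⟶ s.pt, ∀ j, c.ι.app j ≫ d = s.ι.app j := by
  have key (S : E) (i i' : I) (r : (Q i).obj S ⟶ s.pt.obj S) (hr : (k i).app S ≫ r = 𝟙 _) :
      ((g i).app S ≫ r) ≫ (k i').app S = (g i').app S := by
    have h := congrArg (fun t => t.app S) (hc (pushout (k i) (k i')) (g i ≫ pushout.inl _ _)
      (g i' ≫ pushout.inr _ _) fun j => by
        rw [← Category.assoc, ← Category.assoc, hg, hg, Category.assoc, Category.assoc,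
          pushout.condition])
    have hp := (IsPushout.of_hasPushout (k i) (k i')).map ((evaluation E C).obj S)
    have hw : ((evaluation E C).obj S).map (k i) ≫ r ≫ (k i').app S =
        ((evaluation E C).obj S).map (k i') ≫ 𝟙 _ := by
      change (k i).app S ≫ r ≫ (k i').app S = (k i').app S ≫ 𝟙 _
      rw [← Category.assoc, hr, Category.id_comp, Category.comp_id]
    have h' := h =≫ hp.desc _ _ hw
    have e₁ := hp.inl_desc _ _ hw
    have e₂ := hp.inr_desc _ _ hw
    change (pushout.inl (k i) (k i')).app S ≫ _ = _ at e₁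
    change (pushout.inr (k i) (k i')).app S ≫ _ = _ at e₂
    simp only [NatTrans.comp_app, Category.assoc] at h'
    rw [e₁, e₂] at h'
    simpa using h'
  choose i hi using hk
  have hr (S : E) : (k (i S)).app S ≫ retraction ((k (i S)).app S) = 𝟙 _ := IsSplitMono.id _
  have hd (S : E) (i' : I) := key S (i S) i' _ (hr S)
  refine ⟨{ app := fun S => (g (i S)).app S ≫ retraction ((k (i S)).app S)
            naturality := fun S T f => ?_ }, fun j => ?_⟩
  · rw [← cancel_mono ((k (i T)).app T), Category.assoc, hd, Category.assoc,
      (k (i T)).naturality, ← Category.assoc, hd, (g (i T)).naturality]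
  · ext S
    rw [← cancel_mono ((k (i S)).app S), NatTrans.comp_app, Category.assoc, hd]
    exact congrArg (fun t => t.app S) (hg (i S) j)

instance forget_preservesFiniteCoproducts : PreservesFiniteCoproducts (forget Stonean.{w}) :=
  inferInstanceAs
    (PreservesFiniteCoproducts (Stonean.toCompHaus.{w} ⋙ compHausToTop ⋙ forget TopCat))

instance typeToStonean_preservesFiniteCoproducts :
    PreservesFiniteCoproducts typeToStonean.{w} := by
  have := Stonean.stoneCechAdjunction.{w}.leftAdjoint_preservesColimits
  exact ⟨fun n => inferInstance⟩

instance typeToStonean_op_preservesFiniteProducts :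
    PreservesFiniteProducts typeToStonean.{w}.op := preservesFiniteProducts_op _

instance forget_op_preservesFiniteProducts :
    PreservesFiniteProducts (forget Stonean.{w}).op := preservesFiniteProducts_op _

instance counit_isSplitEpi (S : Stonean.{w}) :
    IsSplitEpi (Stonean.stoneCechAdjunction.counit.app S) := by
  have : IsSplitEpi ((forget Stonean).map (Stonean.stoneCechAdjunction.counit.app S)) :=
    ⟨⟨_, Stonean.stoneCechAdjunction.right_triangle_components S⟩⟩
  have : Epi (Stonean.stoneCechAdjunction.counit.app S) :=
    (forget Stonean).epi_of_epi_map inferInstance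
  exact ⟨⟨Projective.factorThru (𝟙 S) (Stonean.stoneCechAdjunction.counit.app S),
    Projective.factorThru_comp _ _⟩⟩

/-- Restriction of a presheaf to Stone-Čech compactifications of discrete sets. -/
noncomputable abbrev discretePre (P : Stonean.{w}ᵒᵖ ⥤ C) : (Type w)ᵒᵖ ⥤ C := typeToStonean.op ⋙ P

/-- The map to the value on the Stone-Čech compactification of the underlying set. -/
noncomputable def toDiscrete (P : Stonean.{w}ᵒᵖ ⥤ C) : P ⟶ (forget Stonean).op ⋙ discretePre P :=
  Functor.whiskerRight (NatTrans.op Stonean.stoneCechAdjunction.counit) P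

instance toDiscrete_app_isSplitMono (P : Stonean.{w}ᵒᵖ ⥤ C) (S : Stonean.{w}ᵒᵖ) :
    IsSplitMono ((toDiscrete P).app S) :=
  inferInstanceAs (IsSplitMono (P.map (Stonean.stoneCechAdjunction.counit.app S.unop).op))

lemma toDiscrete_naturality {P Q : Stonean.{w}ᵒᵖ ⥤ C} (f : P ⟶ Q) :
    toDiscrete P ≫ Functor.whiskerLeft (forget Stonean).op
      (Functor.whiskerLeft typeToStonean.op f) = f ≫ toDiscrete Q := by
  ext S
  exact f.naturality _

variable [Preadditive C]

/-- The map to `optionPre` defined by extension by zero. -/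
noncomputable def toOption {F P : Stonean.{w}ᵒᵖ ⥤ C} [PreservesFiniteProducts F] (f : F ⟶ P) :
    F ⟶ (forget Stonean).op ⋙ optionPre (discretePre P) :=
  toDiscrete F ≫ Functor.whiskerLeft (forget Stonean).op
    (extendZeroHom (discretePre F) ≫ optionPreMap (Functor.whiskerLeft typeToStonean.op f))

lemma toOption_some {F P : Stonean.{w}ᵒᵖ ⥤ C} [PreservesFiniteProducts F] (f : F ⟶ P) :
    toOption f ≫ Functor.whiskerLeft (forget Stonean).op (optionPreSome (discretePre P)) =
      f ≫ toDiscrete P := by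
  rw [← toDiscrete_naturality, toOption, Category.assoc, ← Functor.whiskerLeft_comp]
  congr 2
  ext S
  change (extendZero (discretePre F) S.unop ≫ (Functor.whiskerLeft typeToStonean.op f).app _) ≫
    pb (discretePre P) .some = _
  rw [Category.assoc, ← pb_naturality, ← Category.assoc, extendZero_some, Category.id_comp]

lemma comp_toOption {F G P : Stonean.{w}ᵒᵖ ⥤ C} [PreservesFiniteProducts F]
    [PreservesFiniteProducts G] (g : G ⟶ F) (f : F ⟶ P) :
    toOption (g ≫ f) = g ≫ toOption f := by
  rw [toOption, toOption, ← Category.assoc, ← toDiscrete_naturality, Category.assoc,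
    ← Functor.whiskerLeft_comp]
  congr 2
  ext S
  have h := extendZero_naturality (Functor.whiskerLeft typeToStonean.op g) S.unop =≫
    (Functor.whiskerLeft typeToStonean.op f).app (op (Option S.unop))
  rw [Category.assoc, Category.assoc] at h
  exact h

variable [HasColimitsOfSize.{w, w} C]

/-- The map to the presheaf of sums attached to a map from a sheaf. -/
noncomputable def toSumsSheaf (X : Type w) {F P : Stonean.{w}ᵒᵖ ⥤ C} [PreservesFiniteProducts F]
    (f : F ⟶ P) : F ⟶ (forget Stonean).op ⋙ sumsPresheaf (discretePre P) X :=
  toDiscrete F ≫ Functor.whiskerLeft (forget Stonean).op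
    (toSums X (Functor.whiskerLeft typeToStonean.op f))

lemma comp_toSumsSheaf (X : Type w) {F G P : Stonean.{w}ᵒᵖ ⥤ C} [PreservesFiniteProducts F]
    [PreservesFiniteProducts G] (g : G ⟶ F) (f : F ⟶ P) :
    toSumsSheaf X (g ≫ f) = g ≫ toSumsSheaf X f := by
  rw [toSumsSheaf, toSumsSheaf, Functor.whiskerLeft_comp, toSums_comp, Functor.whiskerLeft_comp,
    ← Category.assoc, ← Category.assoc, toDiscrete_naturality]

lemma toSumsSheaf_sumsToFree (X : Type w) {F P : Stonean.{w}ᵒᵖ ⥤ C} [PreservesFiniteProducts F]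
    (f : F ⟶ P) :
    toSumsSheaf X f ≫ Functor.whiskerLeft (forget Stonean).op (sumsToFree (discretePre P) X) =
      toOption f ≫ Functor.whiskerLeft (forget Stonean).op (toFree (discretePre P) X) := by
  rw [toSumsSheaf, toOption, Category.assoc, Category.assoc, ← Functor.whiskerLeft_comp,
    ← Functor.whiskerLeft_comp, toSums_sumsToFree, Category.assoc]

lemma toFree_isSplitMono (P : (Type w)ᵒᵖ ⥤ C) (S : Type w) :
    IsSplitMono ((toFree P (Option S)).app (op S)) := by
  obtain ⟨r, hr⟩ := exists_toFree_comp P (Option S) (id : Option S → Option S)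
  exact ⟨⟨r, hr.trans (pb_id _ _)⟩⟩

/-- A cocone of product-preserving presheaves which is a colimit among product-preserving
presheaves is a colimit among all presheaves. -/
theorem nonempty_isColimit_of_preservesFiniteProducts [HasZeroObject C] [HasPushouts C]
    {J : Type*} [Category* J]
    {K : J ⥤ Stonean.{w}ᵒᵖ ⥤ C} {c : Cocone K} (hK : ∀ j, PreservesFiniteProducts (K.obj j))
    (hc : PreservesFiniteProducts c.pt)
    (hex : ∀ s : Cocone K, PreservesFiniteProducts s.pt →
      ∃ g : c.pt ⟶ s.pt, ∀ j, c.ι.app j ≫ g = s.ι.app j)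
    (huniq : ∀ (G : Stonean.{w}ᵒᵖ ⥤ C), PreservesFiniteProducts G → ∀ f g : c.pt ⟶ G,
      (∀ j, c.ι.app j ≫ f = c.ι.app j ≫ g) → f = g) :
    Nonempty (IsColimit c) := by
  have hsums (P : Stonean.{w}ᵒᵖ ⥤ C) (X : Type w) :
      PreservesFiniteProducts ((forget Stonean).op ⋙ sumsPresheaf (discretePre P) X) := by
    have := sumsPresheaf_preservesFiniteProducts (discretePre P) X
    infer_instance
  have epi (N : Stonean.{w}ᵒᵖ ⥤ C) (f g : c.pt ⟶ N)
      (h : ∀ j, c.ι.app j ≫ f = c.ι.app j ≫ g) : f = g := by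
    have hsum (X : Type w) : toSumsSheaf X f = toSumsSheaf X g :=
      huniq _ (hsums N X) _ _ fun j => by rw [← comp_toSumsSheaf, ← comp_toSumsSheaf, h]
    have hopt : toOption f = toOption g := by
      ext S
      have := toFree_isSplitMono (discretePre N) ((forget Stonean).obj S.unop)
      have h' := hsum (Option ((forget Stonean).obj S.unop)) =≫
        Functor.whiskerLeft (forget Stonean).op (sumsToFree (discretePre N) _)
      rw [toSumsSheaf_sumsToFree, toSumsSheaf_sumsToFree] at h'
      exact (cancel_mono ((toFree (discretePre N)
        (Option ((forget Stonean).obj S.unop))).app (op ((forget Stonean).obj S.unop)))).1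
          (congrArg (fun t => t.app S) h')
    have hdisc : f ≫ toDiscrete N = g ≫ toDiscrete N := by
      rw [← toOption_some, ← toOption_some, hopt]
    ext S
    exact (cancel_mono ((toDiscrete N).app S)).1 (congrArg (fun t => t.app S) hdisc)
  have exists_desc (s : Cocone K) : ∃ d : c.pt ⟶ s.pt, ∀ j, c.ι.app j ≫ d = s.ι.app j := by
    have hsum (X : Type w) : ∃ g : c.pt ⟶ (forget Stonean).op ⋙ sumsPresheaf (discretePre s.pt) X,
        ∀ j, c.ι.app j ≫ g = toSumsSheaf X (s.ι.app j) :=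
      hex { pt := _
            ι := { app := fun j => toSumsSheaf X (s.ι.app j)
                   naturality := fun j j' f => by
                    rw [← comp_toSumsSheaf, s.w]
                    exact (Category.comp_id _).symm } } (hsums s.pt X)
    choose g hg using hsum
    obtain ⟨d, hd⟩ := exists_desc_of_isSplitMono epi
      { pt := (forget Stonean).op ⋙ optionPre (discretePre s.pt)
        ι := { app := fun j => toOption (s.ι.app j)
               naturality := fun j j' f => by
                rw [← comp_toOption, s.w]
                exact (Category.comp_id _).symm } }
      (fun X => Functor.whiskerLeft (forget Stonean).op (toFree (discretePre s.pt) X))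
      (fun S => ⟨_, toFree_isSplitMono (discretePre s.pt) ((forget Stonean).obj S.unop)⟩)
      (fun X => g X ≫
        Functor.whiskerLeft (forget Stonean).op (sumsToFree (discretePre s.pt) X))
      (fun X j => by
        rw [← Category.assoc, hg]
        exact toSumsSheaf_sumsToFree X (P := s.pt) (s.ι.app j))
    exact exists_desc_of_isSplitMono epi s (I := Unit) (fun _ => toDiscrete s.pt)
      (fun S => ⟨⟨⟩, inferInstance⟩)
      (fun _ => d ≫
        Functor.whiskerLeft (forget Stonean).op (optionPreSome (discretePre s.pt)))
      (fun _ j => by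
        rw [← Category.assoc, hd]
        exact toOption_some (P := s.pt) (s.ι.app j))
  choose d hd using exists_desc
  exact ⟨{ desc := d, fac := hd, uniq := fun s m hm => epi _ _ _ fun j => by rw [hm, hd] }⟩

end

section

open Opposite

variable {C : Type u} [Category.{v} C] [Preadditive C]

lemma isZero_of_not_univLE (h : ¬ UnivLE.{w, v}) {G : (Type w)ᵒᵖ ⥤ C} [PreservesFiniteProducts G]
    (S : Type w) : IsZero (G.obj (op S)) := by
  classical
  rw [IsZero.iff_id_eq_zero]
  by_contra hne
  refine h ⟨fun I => ?_⟩
  let t (i : I) : I × S → Option S := fun p => if p.1 = i then .some p.2 else none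
  let e (i : I) : G.obj (op S) ⟶ G.obj (op (I × S)) := extendZero G S ≫ pb G (t i)
  refine small_of_injective (f := e) fun i i' hi => ?_
  by_contra hii
  have h₁ : e i ≫ pb G (fun s : S => (i, s)) = 𝟙 _ := by
    rw [Category.assoc, pb_comp, ← extendZero_some]
    congr 2
    funext s
    exact if_pos rfl
  have h₂ : e i' ≫ pb G (fun s : S => (i, s)) = 0 := by
    rw [Category.assoc, pb_comp, ← extendZero_const_none G S S]
    congr 2
    funext s
    exact if_neg hii
  exact hne (h₁.symm.trans ((congrArg (· ≫ _) hi).trans h₂))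

lemma isZero_obj_of_not_univLE (h : ¬ UnivLE.{w, v}) {F : Stonean.{w}ᵒᵖ ⥤ C}
    [PreservesFiniteProducts F] (S : Stonean.{w}ᵒᵖ) : IsZero (F.obj S) :=
  (isZero_of_not_univLE h (G := discretePre F) ((forget Stonean).obj S.unop)).of_mono
    ((toDiscrete F).app S)

lemma nonempty_isColimit_of_not_univLE (h : ¬ UnivLE.{w, v}) {J : Type*} [Category* J]
    {K : J ⥤ Stonean.{w}ᵒᵖ ⥤ C} {c : Cocone K} (hK : ∀ j, PreservesFiniteProducts (K.obj j))
    (hc : PreservesFiniteProducts c.pt) : Nonempty (IsColimit c) :=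
  ⟨{ desc := fun _ => 0
     fac := fun _ _ => by
      ext S
      exact (isZero_obj_of_not_univLE h S).eq_of_src _ _
     uniq := fun _ _ _ => by
      ext S
      exact (isZero_obj_of_not_univLE h S).eq_of_src _ _ }⟩

variable [HasFiniteBiproducts C] [HasColimits C]

/-- The inclusion of sheaves on extremally disconnected spaces with values in a cocomplete
preadditive category into presheaves preserves colimits of arbitrary size. -/
theorem preservesColimits_sheafToPresheaf :
    PreservesColimitsOfSize (sheafToPresheaf (coherentTopology Stonean.{w}) C) := by
  refine ⟨⟨fun {K} => ⟨fun {c} hc => ?_⟩⟩⟩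
  have hpfp (F : Sheaf (coherentTopology Stonean.{w}) C) : PreservesFiniteProducts F.obj :=
    (Presheaf.isSheaf_iff_preservesFiniteProducts_of_projective _).1 F.property
  by_cases h : UnivLE.{w, v}
  · have : HasColimitsOfSize.{w, w} C := hasColimitsOfSizeOfUnivLE.{v, v, w, w} C
    have : HasZeroObject C := hasZeroObject_of_hasFiniteBiproducts C
    have hff := fullyFaithfulSheafToPresheaf (coherentTopology Stonean.{w}) C
    refine nonempty_isColimit_of_preservesFiniteProducts (fun j => hpfp (K.obj j)) (hpfp c.pt)
      (fun s hs => ?_) (fun G hG f g hfg => ?_)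
    · let G : Sheaf (coherentTopology Stonean.{w}) C :=
        ⟨s.pt, (Presheaf.isSheaf_iff_preservesFiniteProducts_of_projective _).2 hs⟩
      let t : Cocone K :=
        { pt := G
          ι := { app := fun j => ⟨s.ι.app j⟩
                 naturality := fun j j' f => hff.map_injective (s.ι.naturality f) } }
      refine ⟨(sheafToPresheaf _ _).map (hc.desc t), fun j => ?_⟩
      exact ((sheafToPresheaf _ _).map_comp _ _).symm.trans
        (congrArg _ (hc.fac t j))
    · let G' : Sheaf (coherentTopology Stonean.{w}) C :=
        ⟨G, (Presheaf.isSheaf_iff_preservesFiniteProducts_of_projective _).2 hG⟩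
      obtain ⟨f, rfl⟩ := hff.map_surjective (Y := G') f
      obtain ⟨g, rfl⟩ := hff.map_surjective (Y := G') g
      congr 1
      refine hc.hom_ext fun j => hff.map_injective ?_
      rw [Functor.map_comp, Functor.map_comp]
      exact hfg j
  · exact nonempty_isColimit_of_not_univLE h (fun j => hpfp (K.obj j)) (hpfp c.pt)

end

/-- Let `C` be a preadditive category with finite biproducts and all small colimits.
For every small category `J` and diagram `F` of `C`-valued sheaves on `Stonean`
(extremally disconnected compact Hausdorff spaces) for the coherent topology, the
colimit of the underlying presheaves (computed objectwise) is again a sheaf;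
equivalently, the inclusion of sheaves into presheaves preserves all small colimits. -/
theorem stmt_3 {C : Type u} [Category.{v} C] [Preadditive C] [HasFiniteBiproducts C]
    [HasColimits C] (J : Type v) [SmallCategory J]
    (F : J ⥤ Sheaf (coherentTopology Stonean.{w}) C) :
    Presheaf.IsSheaf (coherentTopology Stonean.{w})
        (colimit (F ⋙ sheafToPresheaf (coherentTopology Stonean.{w}) C)) ∧
      Nonempty (PreservesColimits (sheafToPresheaf (coherentTopology Stonean.{w}) C)) := by
  refine ⟨?_, ⟨preservesColimits_sheafToPresheaf⟩⟩
  let G := F ⋙ sheafToPresheaf (coherentTopology Stonean.{w}) C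
  let i : colimit G ≅ G.flip ⋙ colim :=
    (colimit.isColimit G).coconePointUniqueUpToIso (pointwiseIsColimit G)
  rw [Presheaf.isSheaf_of_iso_iff i,
    Presheaf.isSheaf_iff_preservesFiniteProducts_of_projective]
  have (j : J) : PreservesFiniteProducts (G.obj j) :=
    (Presheaf.isSheaf_iff_preservesFiniteProducts_of_projective _).1 (F.obj j).property
  have : PreservesFiniteProducts G.flip :=
    ⟨fun _ => preservesLimitsOfShape_of_evaluation _ _ fun j =>
      inferInstanceAs (PreservesLimitsOfShape _ (G.obj j))⟩
  infer_instance
end
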